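/- Let 0 < φ < 1, let f be the density of an absolutely continuous nonnegative random variable Z with distribution function F satisfying F(0) = 0 and with finite variance, let v : [0,∞) → ℝ be locally bounded, assume F and v belong to C²₀([0,∞)), and let m be the locally bounded solution of m(u) = φ ∫₀^u m(u−y) f(y) dy + v(u). Define w₁(u) := φ v(0) f(u) + v'(u) and w₂(u) := φ m'(0) f(u) + w₁'(u), where m'(0) = φ v(0) f(0) + v'(0). Then: (i) sup_{u>0} |m''(u)| ≤ ‖w₂‖/(1−φ); (ii) sup_{u>0} |u m''(u)| ≤ ( φ E[Z] ‖m''‖ + sup_{u>0} |u w₂(u)| )/(1−φ); (iii) sup_{u>0} |u² m''(u)| ≤ ( φ ( 2 E[Z] · sup_{u>0}|u m''(u)| + E[Z²] ‖m''‖ ) + sup_{u>0} |u² w₂(u)| )/(1−φ). (The right-hand sides may be infinite.) -/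

import Mathlib

open MeasureTheory Filter Topology
open scoped ENNReal

/-- The function `w₁(u) = φ v(0) f(u) + v'(u)`. -/
noncomputable def w1 (φ : ℝ) (v f : ℝ → ℝ) : ℝ → ℝ :=
  fun u => φ * v 0 * f u + deriv v u

/-- The function `w₂(u) = φ m'(0) f(u) + w₁'(u)`, where `m'(0) = φ v(0) f(0) + v'(0)`
is expressed through the limits `f0 = f(0⁺)` and `v'0 = v'(0⁺)`. -/
noncomputable def w2 (φ f0 v'0 : ℝ) (v f : ℝ → ℝ) : ℝ → ℝ :=
  fun u => φ * (φ * v 0 * f0 + v'0) * f u + deriv (w1 φ v f) u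

/-!
Differentiating the renewal equation twice shows that `m''` solves a renewal equation with the same
kernel and forcing term `w₂`. Multiplying that equation by `uⁿ = ((u - y) + y)ⁿ` and expanding
binomially bounds `|uⁿ m''(u)|` by `φ ∑_{j ≤ n} C(n, j) E[Zⁿ⁻ʲ] sup |uʲ m''|` plus `sup |uⁿ w₂|`; on
a bounded interval the `j = n` term is finite and can be absorbed, which produces the factor
`1 / (1 - φ)`. The three bounds are the cases `n = 0, 1, 2`.

The convolution gains a derivative as soon as `m` is continuous. Since `m` is not assumed
measurable, one first has to exclude that the integral is `0` by convention at some times: the set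
of times at which the integrand is measurable is Borel, and on both it and its complement `m`
agrees with a measurable function.
-/

open Set

/-- `m` is bounded on every compact interval `[0, x]`, the class in which renewal equations are
solved. -/
def IsLocallyBounded (m : ℝ → ℝ) : Prop :=
  ∀ x : ℝ, 0 < x → ∃ M, ∀ u ∈ Icc (0 : ℝ) x, |m u| ≤ M

/-- The renewal equation `m(u) = φ ∫₀ᵘ m(u - y) k(y) dy + v(u)` on `[0, ∞)`. The integral is
Mathlib's, hence `0` when the integrand is not integrable; `m` is not assumed measurable. -/
def IsRenewalSolution (φ : ℝ) (k v m : ℝ → ℝ) : Prop :=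
  ∀ u : ℝ, 0 ≤ u → m u = φ * (∫ y in (0 : ℝ)..u, m (u - y) * k y) + v u

/-- The moment `E[Zʲ]` of the law on `(0, ∞)` with density `f`, as an extended nonnegative number
so that it is meaningful without integrability. -/
noncomputable def densityMoment (f : ℝ → ℝ) (j : ℕ) : ℝ≥0∞ :=
  ∫⁻ y in Ioi (0 : ℝ), ENNReal.ofReal (y ^ j * f y)

/-- The weighted supremum `sup_{u ∈ s} |uⁿ h(u)|`, possibly infinite. -/
noncomputable def weightedSup (s : Set ℝ) (n : ℕ) (h : ℝ → ℝ) : ℝ≥0∞ :=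
  ⨆ u ∈ s, (‖u ^ n * h u‖₊ : ℝ≥0∞)

section WeightedBounds

lemma le_weightedSup {s : Set ℝ} {u : ℝ} (hu : u ∈ s) (n : ℕ) (h : ℝ → ℝ) :
    ‖u ^ n * h u‖ₑ ≤ weightedSup s n h :=
  le_iSup₂ (f := fun x (_ : x ∈ s) => ‖x ^ n * h x‖ₑ) u hu

lemma weightedSup_mono {s t : Set ℝ} (hst : s ⊆ t) (n : ℕ) (h : ℝ → ℝ) :
    weightedSup s n h ≤ weightedSup t n h :=
  biSup_mono fun _ hu => hst hu

lemma weightedSup_congr {s : Set ℝ} {g h : ℝ → ℝ} (hgh : EqOn g h s) (n : ℕ) :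
    weightedSup s n g = weightedSup s n h :=
  biSup_congr fun u hu => by rw [hgh hu]

lemma IsLocallyBounded.weightedSup_Ioc_ne_top {h : ℝ → ℝ} (hh : IsLocallyBounded h) {x : ℝ}
    (hx : 0 < x) (n : ℕ) : weightedSup (Ioc 0 x) n h ≠ ⊤ := by
  obtain ⟨M, hM⟩ := hh x hx
  refine ne_top_of_le_ne_top (ENNReal.ofReal_ne_top (r := x ^ n * M)) (iSup₂_le fun u hu => ?_)
  rw [← enorm_eq_nnnorm, Real.enorm_eq_ofReal_abs, abs_mul, abs_pow, abs_of_pos hu.1]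
  have hpow : u ^ n ≤ x ^ n := pow_le_pow_left₀ hu.1.le hu.2 n
  exact ENNReal.ofReal_le_ofReal <|
    mul_le_mul hpow (hM u (Ioc_subset_Icc_self hu)) (abs_nonneg _) (pow_nonneg hx.le n)

lemma enorm_pow_mul_le_sum {h f : ℝ → ℝ} {y : ℝ} (hy : 0 ≤ y) (hfy : 0 ≤ f y) (u : ℝ) (n : ℕ) :
    ‖u ^ n * (h (u - y) * f y)‖ₑ ≤ ∑ j ∈ Finset.range (n + 1),
      n.choose j * ‖(u - y) ^ j * h (u - y)‖ₑ * ENNReal.ofReal (y ^ (n - j) * f y) := by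
  have hexpand : u ^ n * (h (u - y) * f y) = ∑ j ∈ Finset.range (n + 1),
      n.choose j * ((u - y) ^ j * h (u - y)) * (y ^ (n - j) * f y) := by
    conv_lhs => rw [← sub_add_cancel u y, add_pow, Finset.sum_mul]
    simp only [sub_add_cancel]
    exact Finset.sum_congr rfl fun j _ => by ring
  rw [hexpand]
  refine (enorm_sum_le _ _).trans_eq (Finset.sum_congr rfl fun j _ => ?_)
  rw [enorm_mul, enorm_mul _ ((u - y) ^ j * _), Real.enorm_natCast,
    Real.enorm_of_nonneg (mul_nonneg (pow_nonneg hy _) hfy)]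

lemma lintegral_enorm_pow_mul_le_sum {f h : ℝ → ℝ} (hf_nonneg : ∀ y, 0 < y → 0 ≤ f y)
    (hf_meas : AEMeasurable f (volume.restrict (Ioi 0))) (u : ℝ) (n : ℕ) :
    ∫⁻ y in Ioo 0 u, ‖u ^ n * (h (u - y) * f y)‖ₑ ≤ ∑ j ∈ Finset.range (n + 1),
      n.choose j * densityMoment f (n - j) * weightedSup (Ioo 0 u) j h := by
  have hmeas (j : ℕ) : AEMeasurable (fun y => ENNReal.ofReal (y ^ (n - j) * f y))
      (volume.restrict (Ioi 0)) :=
    ((measurable_id.pow_const _).aemeasurable.mul hf_meas).ennreal_ofReal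
  calc ∫⁻ y in Ioo 0 u, ‖u ^ n * (h (u - y) * f y)‖ₑ
      ≤ ∫⁻ y in Ioo 0 u, ∑ j ∈ Finset.range (n + 1), n.choose j * weightedSup (Ioo 0 u) j h *
          ENNReal.ofReal (y ^ (n - j) * f y) := by
        refine setLIntegral_mono' measurableSet_Ioo fun y hy =>
          (enorm_pow_mul_le_sum hy.1.le (hf_nonneg y hy.1) u n).trans ?_
        gcongr with j
        exact le_weightedSup (s := Ioo 0 u) ⟨sub_pos.2 hy.2, sub_lt_self u hy.1⟩ j h
    _ ≤ ∫⁻ y in Ioi 0, ∑ j ∈ Finset.range (n + 1), n.choose j * weightedSup (Ioo 0 u) j h *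
          ENNReal.ofReal (y ^ (n - j) * f y) := lintegral_mono_set Ioo_subset_Ioi_self
    _ = ∑ j ∈ Finset.range (n + 1),
          n.choose j * densityMoment f (n - j) * weightedSup (Ioo 0 u) j h := by
        rw [lintegral_finsetSum' _ fun j _ => (hmeas j).const_mul _]
        refine Finset.sum_congr rfl fun j _ => ?_
        rw [lintegral_const_mul'' _ (hmeas j), ← densityMoment]
        ring

lemma le_div_one_sub_of_le_mul_add {φ : ℝ} (hφ0 : 0 ≤ φ) (hφ1 : φ < 1) {a b : ℝ≥0∞}
    (ha : a ≠ ⊤) (h : a ≤ ENNReal.ofReal φ * a + b) : a ≤ b / ENNReal.ofReal (1 - φ) := by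
  have hsplit : ENNReal.ofReal φ * a + ENNReal.ofReal (1 - φ) * a = a := by
    rw [← add_mul, ← ENNReal.ofReal_add hφ0 (sub_nonneg.2 hφ1.le)]
    simp
  rw [ENNReal.le_div_iff_mul_le (by simp [hφ1]) (by simp), mul_comm]
  refine (ENNReal.add_le_add_iff_left (ENNReal.mul_ne_top (ENNReal.ofReal_ne_top (r := φ)) ha)).1 ?_
  exact hsplit.trans_le h

variable {φ : ℝ} {f w h : ℝ → ℝ}

lemma IsRenewalSolution.weightedSup_Ioc_le (hφ0 : 0 ≤ φ) (hf_nonneg : ∀ y, 0 < y → 0 ≤ f y)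
    (hf_meas : AEMeasurable f (volume.restrict (Ioi 0))) (hh : IsRenewalSolution φ f w h)
    (x : ℝ) (n : ℕ) :
    weightedSup (Ioc 0 x) n h ≤ ENNReal.ofReal φ * ∑ j ∈ Finset.range (n + 1),
      n.choose j * densityMoment f (n - j) * weightedSup (Ioc 0 x) j h
        + weightedSup (Ioi 0) n w := by
  refine iSup₂_le fun u hu => ?_
  have hsubset : Ioo 0 u ⊆ Ioc 0 x := fun y hy => ⟨hy.1, hy.2.le.trans hu.2⟩
  have heq : u ^ n * h u = φ * (∫ y in Ioo 0 u, u ^ n * (h (u - y) * f y)) + u ^ n * w u := by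
    rw [hh u hu.1.le, intervalIntegral.integral_of_le hu.1.le, integral_Ioc_eq_integral_Ioo,
      integral_const_mul]
    ring
  calc ‖u ^ n * h u‖ₑ
      ≤ ENNReal.ofReal φ * ‖∫ y in Ioo 0 u, u ^ n * (h (u - y) * f y)‖ₑ + ‖u ^ n * w u‖ₑ := by
        rw [heq, ← Real.enorm_of_nonneg hφ0, ← enorm_mul]
        exact enorm_add_le _ _
    _ ≤ ENNReal.ofReal φ * (∫⁻ y in Ioo 0 u, ‖u ^ n * (h (u - y) * f y)‖ₑ)
          + weightedSup (Ioi 0) n w := by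
        gcongr
        · exact enorm_integral_le_lintegral_enorm _
        · exact le_weightedSup hu.1 n w
    _ ≤ _ := by
        gcongr
        refine (lintegral_enorm_pow_mul_le_sum hf_nonneg hf_meas u n).trans ?_
        gcongr with j
        exact weightedSup_mono hsubset j h

-- On `(0, x]` the supremum is finite, so the `j = n` term can be absorbed in the left-hand side.
theorem IsRenewalSolution.weightedSup_le (hφ0 : 0 ≤ φ) (hφ1 : φ < 1)
    (hf_nonneg : ∀ y, 0 < y → 0 ≤ f y) (hf_meas : AEMeasurable f (volume.restrict (Ioi 0)))
    (hf_mass : densityMoment f 0 ≤ 1) (hh_loc : IsLocallyBounded h)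
    (hh : IsRenewalSolution φ f w h) (n : ℕ) :
    weightedSup (Ioi 0) n h ≤ (ENNReal.ofReal φ * ∑ j ∈ Finset.range n,
      n.choose j * densityMoment f (n - j) * weightedSup (Ioi 0) j h
        + weightedSup (Ioi 0) n w) / ENNReal.ofReal (1 - φ) := by
  refine iSup₂_le fun x hx => ?_
  refine (le_weightedSup (right_mem_Ioc.2 hx) n h).trans ?_
  refine le_div_one_sub_of_le_mul_add hφ0 hφ1 (hh_loc.weightedSup_Ioc_ne_top hx n) ?_
  calc weightedSup (Ioc 0 x) n h
      ≤ ENNReal.ofReal φ * (∑ j ∈ Finset.range n,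
          n.choose j * densityMoment f (n - j) * weightedSup (Ioc 0 x) j h
            + densityMoment f 0 * weightedSup (Ioc 0 x) n h) + weightedSup (Ioi 0) n w := by
        simpa [Finset.sum_range_succ] using hh.weightedSup_Ioc_le hφ0 hf_nonneg hf_meas x n
    _ ≤ ENNReal.ofReal φ * (∑ j ∈ Finset.range n,
          n.choose j * densityMoment f (n - j) * weightedSup (Ioi 0) j h
            + 1 * weightedSup (Ioc 0 x) n h) + weightedSup (Ioi 0) n w := by
        gcongr with j
        exact weightedSup_mono Ioc_subset_Ioi_self j h
    _ = _ := by ring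

end WeightedBounds

section Convolution

lemma integral_comp_sub_mul (m k : ℝ → ℝ) (u : ℝ) :
    ∫ y in (0 : ℝ)..u, m (u - y) * k y = ∫ s in (0 : ℝ)..u, m s * k (u - s) := by
  simpa using intervalIntegral.integral_comp_sub_left (a := 0) (b := u) (fun s => m s * k (u - s)) u

lemma continuous_integral_mul_comp_sub {n k : ℝ → ℝ} (hk : Continuous k)
    (hn : ∀ a b, IntervalIntegrable n volume a b) :
    Continuous fun u => ∫ s in (0 : ℝ)..u, n s * k (u - s) := by
  rw [continuous_iff_continuousAt]
  intro u
  set a := min 0 u - 1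
  set b := max 0 u + 1
  have ha : a < 0 ∧ a < u := lt_min_iff.1 (sub_one_lt _)
  have hb : 0 < b ∧ u < b := max_lt_iff.1 (lt_add_one _)
  obtain ⟨C, hC⟩ := ((isCompact_closedBall u 1).prod isCompact_uIcc).exists_bound_of_continuousOn
    (s := Metric.closedBall u 1 ×ˢ uIcc a b) (f := fun p : ℝ × ℝ => k (p.1 - p.2)) (by fun_prop)
  have hjoint : ContinuousAt (fun p : ℝ × ℝ => ∫ s in (0 : ℝ)..p.2, n s * k (p.1 - s)) (u, u) := by
    refine intervalIntegral.continuousAt_parametric_primitive_of_dominated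
      (F := fun x s => n s * k (x - s)) (fun s => ‖n s‖ * C) a b (fun x => ?_) ?_
      ((hn a b).norm.mul_const C) ?_ ⟨ha.1, hb.1⟩ ⟨ha.2, hb.2⟩ Real.volume_singleton
    · exact (hn a b).aestronglyMeasurable_restrict_uIoc.mul
        (Continuous.aestronglyMeasurable (by fun_prop))
    · filter_upwards [Metric.closedBall_mem_nhds u one_pos] with x hx
      filter_upwards [ae_restrict_mem measurableSet_uIoc] with s hs
      rw [norm_mul]
      exact mul_le_mul_of_nonneg_left (hC (x, s) ⟨hx, uIoc_subset_uIcc hs⟩) (norm_nonneg _)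
    · exact Eventually.of_forall fun s => by fun_prop
  exact hjoint.comp (f := fun x : ℝ => (x, x)) (by fun_prop)

variable {E : Type*} [NormedAddCommGroup E] [NormedSpace ℝ E]

lemma hasDerivAt_integral_diagonal [CompleteSpace E] {F : ℝ → ℝ → E}
    (hF : Continuous F.uncurry) (u : ℝ) :
    HasDerivAt (fun b => ∫ s in u..b, F b s) (F u u) u := by
  rw [hasDerivAt_iff_isLittleO, Asymptotics.isLittleO_iff]
  intro ε hε
  obtain ⟨δ, hδ, hclose⟩ := Metric.continuousAt_iff.1 (hF.continuousAt (x := (u, u))) ε hε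
  filter_upwards [Metric.ball_mem_nhds u hδ] with b hb
  have hFb : Continuous (F b) := hF.comp (by fun_prop : Continuous fun s => (b, s))
  have hdiff : (∫ s in u..b, F b s) - (∫ s in u..u, F u s) - (b - u) • F u u
      = ∫ s in u..b, (F b s - F u u) := by
    rw [intervalIntegral.integral_sub (hFb.intervalIntegrable _ _) intervalIntegrable_const]
    simp
  rw [hdiff, Real.norm_eq_abs (b - u)]
  refine intervalIntegral.norm_integral_le_of_norm_le_const fun s hs => ?_
  have hsu : dist s u < δ := (abs_sub_left_of_mem_uIcc (uIoc_subset_uIcc hs)).trans_lt hb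
  exact (dist_eq_norm (F b s) (F u u)).symm.trans_le (hclose (x := (b, s)) (max_lt hb hsu)).le

lemma hasDerivAt_integral_of_continuous {F F' : ℝ → ℝ → E} (hF : Continuous F.uncurry)
    (hF' : Continuous F'.uncurry) (hderiv : ∀ x s, HasDerivAt (F · s) (F' x s) x) (a b u : ℝ) :
    HasDerivAt (fun x => ∫ s in a..b, F x s) (∫ s in a..b, F' u s) u := by
  obtain ⟨C, hC⟩ := ((isCompact_closedBall u 1).prod isCompact_uIcc).exists_bound_of_continuousOn
    (s := Metric.closedBall u 1 ×ˢ uIcc a b) hF'.continuousOn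
  have hslice {G : ℝ → ℝ → E} (hG : Continuous G.uncurry) (x : ℝ) : Continuous (G x) :=
    hG.comp (by fun_prop : Continuous fun s => (x, s))
  exact (intervalIntegral.hasDerivAt_integral_of_dominated_loc_of_deriv_le
    (F := F) (F' := F') (bound := fun _ => C) (Metric.closedBall_mem_nhds u one_pos)
    (Eventually.of_forall fun x => (hslice hF x).aestronglyMeasurable)
    ((hslice hF u).intervalIntegrable _ _) (hslice hF' u).aestronglyMeasurable
    (Eventually.of_forall fun s hs x hx => hC (x, s) ⟨hx, uIoc_subset_uIcc hs⟩)
    intervalIntegrable_const (Eventually.of_forall fun s _ x _ => hderiv x s)).2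

theorem hasDerivAt_integral_leibniz [CompleteSpace E] {F F' : ℝ → ℝ → E} (hF : Continuous F.uncurry)
    (hF' : Continuous F'.uncurry) (hderiv : ∀ x s, HasDerivAt (F · s) (F' x s) x) (a u : ℝ) :
    HasDerivAt (fun x => ∫ s in a..x, F x s) (F u u + ∫ s in a..u, F' u s) u := by
  have hF_int (x c d : ℝ) : IntervalIntegrable (F x) volume c d :=
    (hF.comp (by fun_prop : Continuous fun s => (x, s))).intervalIntegrable c d
  have hsplit : (fun x => ∫ s in a..x, F x s) =
      fun x => (∫ s in u..x, F x s) + ∫ s in a..u, F x s := by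
    ext x
    rw [add_comm, intervalIntegral.integral_add_adjacent_intervals (hF_int x a u) (hF_int x u x)]
  rw [hsplit]
  exact (hasDerivAt_integral_diagonal hF u).add
    (hasDerivAt_integral_of_continuous hF hF' hderiv a u u)

end Convolution

section Measurability

/-- The set of `s ∈ (0, u)` seen by a convolution kernel `k` at time `u`: the integral
`∫₀ᵘ m(s) k(u - s) ds` only depends on the restriction of `m` to it. -/
def kernelWindow (k : ℝ → ℝ) (u : ℝ) : Set ℝ :=
  {s ∈ Ioo 0 u | k (u - s) ≠ 0}

variable {φ : ℝ} {k v m : ℝ → ℝ}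

lemma isOpen_kernelWindow (hk : Continuous k) (u : ℝ) : IsOpen (kernelWindow k u) :=
  isOpen_Ioo.inter (isOpen_ne_fun (by fun_prop) continuous_const)

lemma aestronglyMeasurable_mul_right_iff {α : Type*} [MeasurableSpace α] {μ : Measure α}
    {f g : α → ℝ} (hg : Measurable g) :
    AEStronglyMeasurable (fun x => f x * g x) μ ↔
      AEStronglyMeasurable f (μ.restrict {x | g x ≠ 0}) := by
  have hs : MeasurableSet {x | g x ≠ 0} := hg (measurableSet_singleton 0).compl
  constructor
  · intro h
    refine (h.restrict.mul hg.inv.aestronglyMeasurable).congr ?_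
    filter_upwards [ae_restrict_mem hs] with x hx
    exact mul_inv_cancel_right₀ hx (f x)
  · intro h
    have hind : (fun x => f x * g x) = fun x => {x | g x ≠ 0}.indicator f x * g x := by
      ext x
      by_cases hx : g x = 0 <;> simp [hx]
    rw [hind]
    exact ((aestronglyMeasurable_indicator_iff hs).2 h).mul hg.aestronglyMeasurable

lemma aestronglyMeasurable_mul_comp_sub_iff (hk : Continuous k) (u : ℝ) :
    AEStronglyMeasurable (fun s => m s * k (u - s)) (volume.restrict (Ioo 0 u)) ↔
      AEStronglyMeasurable m (volume.restrict (kernelWindow k u)) := by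
  rw [aestronglyMeasurable_mul_right_iff (by fun_prop),
    Measure.restrict_restrict (isOpen_ne_fun (by fun_prop) continuous_const).measurableSet,
    inter_comm]
  rfl

lemma integral_mul_comp_sub_congr {n : ℝ → ℝ} {u : ℝ} (hu : 0 ≤ u)
    (hnm : EqOn n m (kernelWindow k u)) :
    ∫ s in (0 : ℝ)..u, n s * k (u - s) = ∫ s in (0 : ℝ)..u, m s * k (u - s) := by
  refine intervalIntegral.integral_congr_Ioo_of_le hu fun s hs => ?_
  by_cases hks : k (u - s) = 0
  · simp [hks]
  · simp only [hnm ⟨hs, hks⟩]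

/-- The union of the kernel windows on which `m` is measurable: the part of `(0, ∞)` where the
measurability of `m` can be read off from that of the integrands `s ↦ m(s) k(u - s)`. -/
def measurableWindow (k m : ℝ → ℝ) : Set ℝ :=
  ⋃ u ∈ {u | AEStronglyMeasurable m (volume.restrict (kernelWindow k u))}, kernelWindow k u

lemma isOpen_measurableWindow (hk : Continuous k) : IsOpen (measurableWindow k m) :=
  isOpen_biUnion fun u _ => isOpen_kernelWindow hk u

lemma aestronglyMeasurable_measurableWindow (hk : Continuous k) :
    AEStronglyMeasurable m (volume.restrict (measurableWindow k m)) := by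
  obtain ⟨T, hTS, hT, hTW⟩ := TopologicalSpace.isOpen_biUnion_countable
    {u | AEStronglyMeasurable m (volume.restrict (kernelWindow k u))} (kernelWindow k)
    fun u _ => isOpen_kernelWindow hk u
  have := hT.to_subtype
  rw [measurableWindow, ← hTW, biUnion_eq_iUnion, aestronglyMeasurable_iUnion_iff]
  exact fun u => hTS u.2

lemma kernelWindow_subset_measurableWindow_iff (hk : Continuous k) (u : ℝ) :
    kernelWindow k u ⊆ measurableWindow k m ↔
      AEStronglyMeasurable m (volume.restrict (kernelWindow k u)) :=
  ⟨fun h => (aestronglyMeasurable_measurableWindow hk).mono_set h,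
    fun h => subset_biUnion_of_mem (u := kernelWindow k) h⟩

lemma measurableSet_setOf_kernelWindow_subset (hk : Continuous k) (W : Set ℝ) :
    MeasurableSet {u | kernelWindow k u ⊆ W} := by
  have hcompl : {u | kernelWindow k u ⊆ W}ᶜ = ⋃ s ∈ Ioi 0 \ W, {u | s < u ∧ k (u - s) ≠ 0} := by
    ext u
    simp only [kernelWindow, mem_compl_iff, mem_ofPred_eq, not_subset, mem_iUnion, exists_prop,
      mem_Ioo, Set.mem_sdiff, mem_Ioi]
    tauto
  refine .of_compl (hcompl ▸ (isOpen_biUnion fun s _ => ?_).measurableSet)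
  exact isOpen_Ioi.inter (isOpen_ne_fun (by fun_prop) continuous_const)

lemma IsLocallyBounded.intervalIntegrable_indicator (hm : IsLocallyBounded m) {s : Set ℝ}
    (hs : MeasurableSet s) (hs0 : s ⊆ Ioi 0)
    (hms : AEStronglyMeasurable m (volume.restrict s)) (a b : ℝ) :
    IntervalIntegrable (s.indicator m) volume a b := by
  have hb : 0 < max (max a b) 1 := lt_max_of_lt_right one_pos
  obtain ⟨M, hM⟩ := hm _ hb
  have hbound : ∀ x ∈ uIoc a b, ‖s.indicator m x‖ ≤ |M| := by
    intro x hx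
    by_cases hxs : x ∈ s
    · rw [indicator_of_mem hxs]
      exact (hM x ⟨(hs0 hxs).le, hx.2.trans (le_max_left _ _)⟩).trans (le_abs_self M)
    · simp [hxs]
  rw [intervalIntegrable_iff]
  exact Measure.integrableOn_of_bounded measure_Ioc_lt_top.ne
    ((aestronglyMeasurable_indicator_iff hs).2 hms)
    ((ae_restrict_mem measurableSet_uIoc).mono hbound)

lemma IsRenewalSolution.eq_integral_of_eqOn {n : ℝ → ℝ} (hm : IsRenewalSolution φ k v m) {u : ℝ}
    (hu : 0 ≤ u) (hnm : EqOn n m (kernelWindow k u)) :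
    m u = φ * (∫ s in (0 : ℝ)..u, n s * k (u - s)) + v u := by
  rw [hm u hu, integral_comp_sub_mul, integral_mul_comp_sub_congr hu hnm]

lemma IsRenewalSolution.eq_of_not_aestronglyMeasurable (hk : Continuous k)
    (hm : IsRenewalSolution φ k v m) {u : ℝ} (hu : 0 ≤ u)
    (h : ¬ AEStronglyMeasurable m (volume.restrict (kernelWindow k u))) : m u = v u := by
  rw [hm u hu, integral_comp_sub_mul, intervalIntegral.integral_of_le hu,
    integral_Ioc_eq_integral_Ioo, integral_non_aestronglyMeasurable]
  · simp
  · rwa [aestronglyMeasurable_mul_comp_sub_iff hk]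

-- Where the integrand is not measurable Mathlib's integral vanishes and `m = v`; elsewhere `m`
-- may be replaced by its restriction to `measurableWindow k m`, which gives a continuous function.
lemma IsRenewalSolution.aestronglyMeasurable (hk : Continuous k) (hv : ContinuousOn v (Ici 0))
    (hm_loc : IsLocallyBounded m) (hm : IsRenewalSolution φ k v m) :
    AEStronglyMeasurable m (volume.restrict (Ioi 0)) := by
  set W := measurableWindow k m
  set S := {u | kernelWindow k u ⊆ W}
  have hS : MeasurableSet S := measurableSet_setOf_kernelWindow_subset hk W
  have hW0 : W ⊆ Ioi 0 := iUnion₂_subset fun u _ s hs => hs.1.1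
  have hW : MeasurableSet W := (isOpen_measurableWindow hk).measurableSet
  have hv_meas : AEStronglyMeasurable v (volume.restrict (Ioi 0)) :=
    (hv.mono Ioi_subset_Ici_self).aestronglyMeasurable measurableSet_Ioi
  have hconv : Continuous fun u => ∫ s in (0 : ℝ)..u, W.indicator m s * k (u - s) :=
    continuous_integral_mul_comp_sub hk <| hm_loc.intervalIntegrable_indicator hW hW0
      (aestronglyMeasurable_measurableWindow hk)
  rw [← inter_union_sdiff (Ioi 0) S, aestronglyMeasurable_union_iff]
  constructor
  · refine (((hconv.const_smul φ).aestronglyMeasurable.add hv_meas).mono_set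
      inter_subset_left).congr ?_
    filter_upwards [ae_restrict_mem (measurableSet_Ioi.inter hS)] with u hu
    exact (hm.eq_integral_of_eqOn hu.1.le fun s hs => indicator_of_mem (hu.2 hs) m).symm
  · refine (hv_meas.mono_set sdiff_subset).congr ?_
    filter_upwards [ae_restrict_mem (measurableSet_Ioi.diff hS)] with u hu
    exact (hm.eq_of_not_aestronglyMeasurable hk hu.1.le fun h =>
      hu.2 ((kernelWindow_subset_measurableWindow_iff hk u).2 h)).symm

theorem IsRenewalSolution.continuousOn (hk : Continuous k) (hv : ContinuousOn v (Ici 0))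
    (hm_loc : IsLocallyBounded m) (hm : IsRenewalSolution φ k v m) :
    ContinuousOn m (Ici 0) := by
  have hconv : Continuous fun u => ∫ s in (0 : ℝ)..u, (Ioi 0).indicator m s * k (u - s) :=
    continuous_integral_mul_comp_sub hk <| hm_loc.intervalIntegrable_indicator measurableSet_Ioi
      subset_rfl (hm.aestronglyMeasurable hk hv hm_loc)
  refine ((hconv.const_smul φ).continuousOn.add hv).congr fun u hu => ?_
  exact hm.eq_integral_of_eqOn hu fun s hs => indicator_of_mem hs.1.1 m

end Measurability

section Differentiation

lemma exists_contDiff_eqOn_Ioi {E : Type*} [NormedAddCommGroup E] [NormedSpace ℝ E]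
    [CompleteSpace E] {g : ℝ → E} {a : ℝ} {L L' : E} (hg : ContDiffOn ℝ 1 g (Ioi a))
    (hL : Tendsto g (𝓝[>] a) (𝓝 L)) (hL' : Tendsto (deriv g) (𝓝[>] a) (𝓝 L')) :
    ∃ k : ℝ → E, ContDiff ℝ 1 k ∧ EqOn k g (Ioi a) ∧ k a = L := by
  have hderiv : ContinuousOn (deriv g) (Ioi a) := hg.continuousOn_deriv_of_isOpen isOpen_Ioi le_rfl
  set g' : ℝ → E := fun x => extendFrom (Ioi a) (deriv g) (max a x)
  have hg'_eq : EqOn g' (deriv g) (Ioi a) := fun x hx => by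
    simp only [g', max_eq_right hx.out.le, extendFrom_extends hderiv x hx]
  have hg' : Continuous g' := by
    refine (continuousOn_extendFrom (B := Ici a) (closure_Ioi a).ge fun x hx => ?_).comp_continuous
      (by fun_prop) fun x => le_max_left a x
    obtain rfl | hx := eq_or_lt_of_le hx.out
    exacts [⟨L', hL'⟩, ⟨_, hderiv x hx⟩]
  have hk (x : ℝ) : HasDerivAt (fun u => L + ∫ t in a..u, g' t) (g' x) x :=
    (intervalIntegral.integral_hasDerivAt_right (hg'.intervalIntegrable _ _)
      (hg'.stronglyMeasurableAtFilter _ _) hg'.continuousAt).const_add L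
  refine ⟨fun u => L + ∫ t in a..u, g' t, ?_, fun u hu => ?_, by simp⟩
  · exact contDiff_one_iff_deriv.2 ⟨fun x => (hk x).differentiableAt, by
      rwa [funext fun x => (hk x).deriv]⟩
  · have hdiff (x : ℝ) (hx : a < x) : HasDerivAt g (deriv g x) x :=
      ((hg.differentiableOn one_ne_zero).differentiableAt (Ioi_mem_nhds hx)).hasDerivAt
    have hftc : ∫ t in a..u, g' t = g u - L :=
      intervalIntegral.integral_eq_sub_of_hasDerivAt_of_tendsto hu
        (fun x hx => hg'_eq hx.1 ▸ hdiff x hx.1) (hg'.intervalIntegrable _ _) hL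
        ((hdiff u hu).continuousAt.tendsto.mono_left nhdsWithin_le_nhds)
    simp only [hftc, add_sub_cancel]

variable {φ : ℝ} {k v m : ℝ → ℝ}

lemma IsRenewalSolution.apply_zero (hm : IsRenewalSolution φ k v m) : m 0 = v 0 := by
  simpa using hm 0 le_rfl

lemma IsRenewalSolution.congr {k₂ v₂ m₂ : ℝ → ℝ} (hm : IsRenewalSolution φ k v m)
    (hk : EqOn k k₂ (Ioi 0)) (hv : EqOn v v₂ (Ici 0)) (hm₂ : EqOn m m₂ (Ici 0)) :
    IsRenewalSolution φ k₂ v₂ m₂ := by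
  intro u hu
  rw [← hm₂ hu, ← hv hu, hm u hu]
  congr 2
  refine intervalIntegral.integral_congr_Ioo_of_le hu fun y hy => ?_
  simp only [hk hy.1, hm₂ (sub_nonneg.2 hy.2.le)]

lemma hasDerivAt_integral_mul_comp_sub (hm : Continuous m) (hk : ContDiff ℝ 1 k) (u : ℝ) :
    HasDerivAt (fun x => ∫ s in (0 : ℝ)..x, m s * k (x - s))
      (m u * k 0 + ∫ s in (0 : ℝ)..u, m s * deriv k (u - s)) u := by
  have : Continuous (deriv k) := hk.continuous_deriv_one
  have hderiv (x s : ℝ) : HasDerivAt (fun x => m s * k (x - s)) (m s * deriv k (x - s)) x :=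
    ((hk.differentiable_one (x - s)).hasDerivAt.comp_sub_const x s).const_mul (m s)
  simpa using hasDerivAt_integral_leibniz (F := fun x s => m s * k (x - s))
    (F' := fun x s => m s * deriv k (x - s)) (by unfold Function.uncurry; fun_prop)
    (by unfold Function.uncurry; fun_prop) hderiv 0 u

lemma integral_mul_deriv_comp_sub {m' : ℝ → ℝ} {u : ℝ} (hu : 0 ≤ u) (hm : Continuous m)
    (hm' : Continuous m') (hderiv : ∀ x, 0 < x → HasDerivAt m (m' x) x) (hk : ContDiff ℝ 1 k) :
    ∫ s in (0 : ℝ)..u, m s * deriv k (u - s) =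
      m 0 * k u - m u * k 0 + ∫ s in (0 : ℝ)..u, m' s * k (u - s) := by
  have : Continuous (deriv k) := hk.continuous_deriv_one
  have hkd (s : ℝ) : HasDerivAt (fun s => -k (u - s)) (deriv k (u - s)) s := by
    simpa using ((hk.differentiable_one (u - s)).hasDerivAt.comp_const_sub u s).fun_neg
  have hparts := intervalIntegral.integral_mul_deriv_eq_deriv_mul_of_hasDeriv_right
    (a := 0) (b := u) hm.continuousOn (HasDerivAt.continuousOn fun s _ => hkd s)
    (fun s hs => (hderiv s (min_eq_left hu ▸ hs.1)).hasDerivWithinAt)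
    (fun s _ => (hkd s).hasDerivWithinAt) (hm'.intervalIntegrable _ _)
    (Continuous.intervalIntegrable (by fun_prop) _ _)
  rw [hparts]
  simp only [mul_neg, intervalIntegral.integral_neg, sub_self, sub_zero]
  ring

theorem IsRenewalSolution.exists_deriv {v' : ℝ → ℝ} (hk : ContDiff ℝ 1 k) (hm_cont : Continuous m)
    (hv' : Continuous v') (hv : ∀ u, 0 < u → HasDerivAt v (v' u) u)
    (hm : IsRenewalSolution φ k v m) :
    ∃ m' : ℝ → ℝ, Continuous m' ∧ (∀ u, 0 < u → HasDerivAt m (m' u) u) ∧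
      IsRenewalSolution φ k (fun u => φ * v 0 * k u + v' u) m' := by
  set m' : ℝ → ℝ := fun u => φ * (m u * k 0 + ∫ s in (0 : ℝ)..u, m s * deriv k (u - s)) + v' u
  have hm' : Continuous m' := by
    have := continuous_integral_mul_comp_sub hk.continuous_deriv_one hm_cont.intervalIntegrable
    fun_prop
  have hderiv (u : ℝ) (hu : 0 < u) : HasDerivAt m (m' u) u := by
    refine (((hasDerivAt_integral_mul_comp_sub hm_cont hk u).const_mul φ).add
      (hv u hu)).congr_of_eventuallyEq ?_
    filter_upwards [Ioi_mem_nhds hu] with x hx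
    rw [hm x hx.le, integral_comp_sub_mul]
    rfl
  refine ⟨m', hm', hderiv, fun u hu => ?_⟩
  rw [integral_comp_sub_mul, ← hm.apply_zero]
  simp only [m', integral_mul_deriv_comp_sub hu hm_cont hm' hderiv hk]
  ring

lemma IsRenewalSolution.exists_deriv_two {d : ℝ → ℝ} (hk : ContDiff ℝ 1 k) (hd : ContDiff ℝ 1 d)
    (hv_cont : ContinuousOn v (Ici 0)) (hv : ∀ u, 0 < u → HasDerivAt v (d u) u)
    (hm_loc : IsLocallyBounded m) (hm : IsRenewalSolution φ k v m) :
    ∃ h : ℝ → ℝ, Continuous h ∧ EqOn h (iteratedDeriv 2 m) (Ioi 0) ∧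
      IsRenewalSolution φ k (fun u => φ * (φ * v 0 * k 0 + d 0) * k u
        + deriv (fun x => φ * v 0 * k x + d x) u) h := by
  set n : ℝ → ℝ := fun u => m (max 0 u)
  have hmn : EqOn m n (Ici 0) := fun u hu => by simp only [n, max_eq_right hu.out]
  have hn : Continuous n := (hm.continuousOn hk.continuous hv_cont hm_loc).comp_continuous
    (by fun_prop) fun u => le_max_left 0 u
  obtain ⟨n', hn', hn_deriv, hn'_eq⟩ :=
    (hm.congr (eqOn_refl _ _) (eqOn_refl _ _) hmn).exists_deriv hk hn hd.continuous hv
  have hw : ContDiff ℝ 1 fun u => φ * v 0 * k u + d u := by fun_prop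
  obtain ⟨h, hh, hh_deriv, hh_eq⟩ := hn'_eq.exists_deriv hk hn' hw.continuous_deriv_one
    fun u _ => (hw.differentiable_one u).hasDerivAt
  refine ⟨h, hh, fun u hu => ?_, hh_eq⟩
  have hm_deriv : EqOn (deriv m) n' (Ioi 0) := fun x hx => by
    rw [(hmn.mono Ioi_subset_Ici_self).deriv isOpen_Ioi hx, (hn_deriv x hx).deriv]
  rw [iteratedDeriv_succ, iteratedDeriv_one, hm_deriv.deriv isOpen_Ioi hu, (hh_deriv u hu).deriv]

-- `deriv` is two-sided, so `m''` and `w₂` have junk values at `0`; `h` and `w`, built from `C¹`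
-- extensions of `f` and `v'` to `ℝ`, agree with them on `(0, ∞)` and solve the equation at `0` too.
theorem IsRenewalSolution.exists_eqOn_iteratedDeriv_two {f : ℝ → ℝ} {f0 v'0 : ℝ}
    (hf : ContDiffOn ℝ 1 f (Ioi 0)) (hf0 : Tendsto f (𝓝[>] 0) (𝓝 f0))
    (hf'0 : ∃ L, Tendsto (deriv f) (𝓝[>] 0) (𝓝 L)) (hv_cont : ContinuousOn v (Ici 0))
    (hv : ContDiffOn ℝ 2 v (Ioi 0)) (hv'0 : Tendsto (deriv v) (𝓝[>] 0) (𝓝 v'0))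
    (hv''0 : ∃ L, Tendsto (deriv (deriv v)) (𝓝[>] 0) (𝓝 L))
    (hm_loc : IsLocallyBounded m) (hm : IsRenewalSolution φ f v m) :
    ∃ h w : ℝ → ℝ, Continuous h ∧ IsRenewalSolution φ f w h ∧
      EqOn h (iteratedDeriv 2 m) (Ioi 0) ∧ EqOn w (w2 φ f0 v'0 v f) (Ioi 0) := by
  obtain ⟨L, hL⟩ := hf'0
  obtain ⟨L', hL'⟩ := hv''0
  obtain ⟨k, hk, hkf, rfl⟩ := exists_contDiff_eqOn_Ioi hf hf0 hL
  obtain ⟨d, hd, hdv, rfl⟩ := exists_contDiff_eqOn_Ioi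
    (hv.deriv_of_isOpen isOpen_Ioi one_add_one_eq_two.le) hv'0 hL'
  have hv_deriv (u : ℝ) (hu : 0 < u) : HasDerivAt v (d u) u :=
    hdv hu ▸ ((hv.differentiableOn two_ne_zero).differentiableAt (Ioi_mem_nhds hu)).hasDerivAt
  obtain ⟨h, hh, hhm, hh_eq⟩ := (hm.congr hkf.symm (eqOn_refl _ _) (eqOn_refl _ _)).exists_deriv_two
    hk hd hv_cont hv_deriv hm_loc
  refine ⟨h, _, hh, hh_eq.congr hkf (eqOn_refl _ _) (eqOn_refl _ _), hhm, fun u hu => ?_⟩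
  have hw1 : EqOn (fun x => φ * v 0 * k x + d x) (w1 φ v f) (Ioi 0) := fun x hx => by
    simp only [w1, hkf hx, hdv hx]
  simp only [w2, hkf hu, hw1.deriv isOpen_Ioi hu]

end Differentiation

section SecondDerivative

lemma isLocallyBounded_of_continuous {h : ℝ → ℝ} (hh : Continuous h) : IsLocallyBounded h :=
  fun _ _ => isCompact_Icc.exists_bound_of_continuousOn hh.continuousOn

theorem stmt_9_general {φ : ℝ} (hφ0 : 0 ≤ φ) (hφ1 : φ < 1) {f v m : ℝ → ℝ} {f0 v'0 : ℝ}
    (hf_nonneg : ∀ y, 0 < y → 0 ≤ f y) (hf_mass : densityMoment f 0 ≤ 1)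
    (hf : ContDiffOn ℝ 1 f (Ioi 0)) (hf0 : Tendsto f (𝓝[>] 0) (𝓝 f0))
    (hf'0 : ∃ L, Tendsto (deriv f) (𝓝[>] 0) (𝓝 L)) (hv_cont : ContinuousOn v (Ici 0))
    (hv : ContDiffOn ℝ 2 v (Ioi 0)) (hv'0 : Tendsto (deriv v) (𝓝[>] 0) (𝓝 v'0))
    (hv''0 : ∃ L, Tendsto (deriv (deriv v)) (𝓝[>] 0) (𝓝 L))
    (hm_loc : IsLocallyBounded m) (hm : IsRenewalSolution φ f v m) (n : ℕ) :
    weightedSup (Ioi 0) n (iteratedDeriv 2 m) ≤ (ENNReal.ofReal φ * ∑ j ∈ Finset.range n,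
      n.choose j * densityMoment f (n - j) * weightedSup (Ioi 0) j (iteratedDeriv 2 m)
        + weightedSup (Ioi 0) n (w2 φ f0 v'0 v f)) / ENNReal.ofReal (1 - φ) := by
  obtain ⟨h, w, hh, hh_eq, hhm, hw⟩ :=
    hm.exists_eqOn_iteratedDeriv_two hf hf0 hf'0 hv_cont hv hv'0 hv''0 hm_loc
  simp only [← weightedSup_congr hhm, ← weightedSup_congr hw]
  exact hh_eq.weightedSup_le hφ0 hφ1 hf_nonneg (hf.continuousOn.aemeasurable measurableSet_Ioi)
    hf_mass (isLocallyBounded_of_continuous hh) n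

lemma densityMoment_eq_ofReal_integral {f : ℝ → ℝ} (hf_nonneg : ∀ y, 0 < y → 0 ≤ f y) {j : ℕ}
    (hf : IntegrableOn (fun y => y ^ j * f y) (Ioi 0)) :
    densityMoment f j = ENNReal.ofReal (∫ y in Ioi 0, y ^ j * f y) := by
  refine (ofReal_integral_eq_lintegral_ofReal hf ?_).symm
  filter_upwards [ae_restrict_mem measurableSet_Ioi] with y hy
  exact mul_nonneg (pow_nonneg hy.out.le j) (hf_nonneg y hy)

variable {E : Type*} [NormedAddCommGroup E] [NormedSpace ℝ E] {f F : ℝ → E}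

lemma contDiffOn_one_of_hasDerivAt {s : Set ℝ} (hs : IsOpen s)
    (hF : ContDiffOn ℝ 2 F s) (hFf : ∀ u ∈ s, HasDerivAt F (f u) u) : ContDiffOn ℝ 1 f s :=
  (hF.deriv_of_isOpen hs one_add_one_eq_two.le).congr fun u hu => (hFf u hu).deriv.symm

lemma tendsto_deriv_of_iteratedDeriv_two {a : ℝ} {L : E} (hFf : ∀ u, a < u → HasDerivAt F (f u) u)
    (hF : Tendsto (iteratedDeriv 2 F) (𝓝[>] a) (𝓝 L)) : Tendsto (deriv f) (𝓝[>] a) (𝓝 L) := by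
  have hderiv : EqOn (deriv F) f (Ioi a) := fun u hu => (hFf u hu).deriv
  refine hF.congr' ?_
  filter_upwards [self_mem_nhdsWithin] with u hu
  rw [iteratedDeriv_succ, iteratedDeriv_one, hderiv.deriv isOpen_Ioi hu]

end SecondDerivative

/-- bounds on the weighted second derivative of the solution of a
defective renewal equation whose underlying distribution has finite variance:
`‖m''‖ ≤ ‖w₂‖/(1-φ)`, `‖u m''(u)‖ ≤ (φ E[Z] ‖m''‖ + ‖u w₂(u)‖)/(1-φ)`, and
`‖u² m''(u)‖ ≤ (φ(2 E[Z] ‖u m''(u)‖ + E[Z²] ‖m''‖) + ‖u² w₂(u)‖)/(1-φ)`.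
All suprema are over `(0,∞)`, computed in `ℝ≥0∞` (so they may be infinite). -/
theorem stmt_9 (φ : ℝ) (hφ0 : 0 < φ) (hφ1 : φ < 1)
    (f F v m : ℝ → ℝ)
    (hf_nonneg : ∀ u : ℝ, 0 < u → 0 ≤ f u)
    (hf_integrable : MeasureTheory.IntegrableOn f (Set.Ioi 0))
    (hf_total : ∫ y in Set.Ioi (0:ℝ), f y = 1)
    (hF_def : ∀ u : ℝ, 0 ≤ u → F u = ∫ y in (0:ℝ)..u, f y)
    (hFf : ∀ u : ℝ, 0 < u → HasDerivAt F (f u) u)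
    (hZ1 : MeasureTheory.IntegrableOn (fun y => y * f y) (Set.Ioi 0))
    (hZ2 : MeasureTheory.IntegrableOn (fun y => y ^ 2 * f y) (Set.Ioi 0))
    (hv_loc : ∀ x : ℝ, 0 < x → ∃ M, ∀ u ∈ Set.Icc (0:ℝ) x, |v u| ≤ M)
    (hm_loc : ∀ x : ℝ, 0 < x → ∃ M, ∀ u ∈ Set.Icc (0:ℝ) x, |m u| ≤ M)
    (hm_eq : ∀ u : ℝ, 0 ≤ u →
      m u = φ * (∫ y in (0:ℝ)..u, m (u - y) * f y) + v u)
    (hF_c : ContinuousOn F (Set.Ici 0)) (hF_cd : ContDiffOn ℝ 2 F (Set.Ioi 0))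
    (hF_lim : ∀ k ≤ 2, ∃ L, Tendsto (iteratedDeriv k F) (𝓝[>] (0:ℝ)) (𝓝 L))
    (hv_c : ContinuousOn v (Set.Ici 0)) (hv_cd : ContDiffOn ℝ 2 v (Set.Ioi 0))
    (hv_lim : ∀ k ≤ 2, ∃ L, Tendsto (iteratedDeriv k v) (𝓝[>] (0:ℝ)) (𝓝 L))
    (f0 v'0 : ℝ)
    (hf0 : Tendsto f (𝓝[>] (0:ℝ)) (𝓝 f0))
    (hv'0 : Tendsto (deriv v) (𝓝[>] (0:ℝ)) (𝓝 v'0)) :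
    ((⨆ u ∈ Set.Ioi (0:ℝ), (‖iteratedDeriv 2 m u‖₊ : ℝ≥0∞)) ≤
        (⨆ u ∈ Set.Ioi (0:ℝ), (‖w2 φ f0 v'0 v f u‖₊ : ℝ≥0∞))
          / ENNReal.ofReal (1 - φ)) ∧
    ((⨆ u ∈ Set.Ioi (0:ℝ), (‖u * iteratedDeriv 2 m u‖₊ : ℝ≥0∞)) ≤
        (ENNReal.ofReal (φ * ∫ y in Set.Ioi (0:ℝ), y * f y)
            * (⨆ u ∈ Set.Ioi (0:ℝ), (‖iteratedDeriv 2 m u‖₊ : ℝ≥0∞))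
          + ⨆ u ∈ Set.Ioi (0:ℝ), (‖u * w2 φ f0 v'0 v f u‖₊ : ℝ≥0∞))
          / ENNReal.ofReal (1 - φ)) ∧
    ((⨆ u ∈ Set.Ioi (0:ℝ), (‖u ^ 2 * iteratedDeriv 2 m u‖₊ : ℝ≥0∞)) ≤
        (ENNReal.ofReal φ *
            (2 * ENNReal.ofReal (∫ y in Set.Ioi (0:ℝ), y * f y)
                * (⨆ u ∈ Set.Ioi (0:ℝ), (‖u * iteratedDeriv 2 m u‖₊ : ℝ≥0∞))
              + ENNReal.ofReal (∫ y in Set.Ioi (0:ℝ), y ^ 2 * f y)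
                * (⨆ u ∈ Set.Ioi (0:ℝ), (‖iteratedDeriv 2 m u‖₊ : ℝ≥0∞)))
          + ⨆ u ∈ Set.Ioi (0:ℝ), (‖u ^ 2 * w2 φ f0 v'0 v f u‖₊ : ℝ≥0∞))
          / ENNReal.ofReal (1 - φ)) := by
  have hf'0 : ∃ L, Tendsto (deriv f) (𝓝[>] 0) (𝓝 L) :=
    (hF_lim 2 le_rfl).imp fun _ => tendsto_deriv_of_iteratedDeriv_two hFf
  have hv''0 : ∃ L, Tendsto (deriv (deriv v)) (𝓝[>] 0) (𝓝 L) := by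
    simpa only [iteratedDeriv_succ, iteratedDeriv_zero] using hv_lim 2 le_rfl
  have hE0 : densityMoment f 0 = 1 := by
    simp [densityMoment_eq_ofReal_integral (j := 0) hf_nonneg (by simpa), hf_total]
  have hE1 : densityMoment f 1 = ENNReal.ofReal (∫ y in Ioi 0, y * f y) := by
    simpa using densityMoment_eq_ofReal_integral (j := 1) hf_nonneg (by simpa)
  have hE2 := densityMoment_eq_ofReal_integral hf_nonneg hZ2
  have hbound := stmt_9_general hφ0.le hφ1 hf_nonneg hE0.le
    (contDiffOn_one_of_hasDerivAt isOpen_Ioi hF_cd hFf) hf0 hf'0 hv_c hv_cd hv'0 hv''0 hm_loc hm_eq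
  refine ⟨?_, ?_, ?_⟩
  · simpa [weightedSup] using hbound 0
  · simpa [weightedSup, hE1, ENNReal.ofReal_mul hφ0.le, mul_assoc] using hbound 1
  · simpa [weightedSup, hE1, hE2, Finset.sum_range_succ, add_comm] using hbound 2
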